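/- arXiv:1311.5324 — 3 statements merged into one kernel-verified Lean document; each statement's English description precedes it below -/
import Mathlib

section
/- Let Λ = (λ_i) be a nondecreasing sequence of positive real numbers with ∑ 1/λ_i = +∞, let p ∈ [1,∞), let q = (q(n)) be an increasing sequence of positive reals, and let δ = (δ(n)) be an increasing unbounded sequence of positive reals. Then the inclusion ΛBV^(p) ⊆ BV(q;δ) holds if and only if limsup_{n→∞} max_{1 ≤ k ≤ δ(n)} k^{1/q(n)} / (∑_{i=1}^{k} 1/λ_i)^{1/p} < +∞ (the maximum being over integers k with 1 ≤ k ≤ δ(n)). -/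
open scoped ENNReal
open Filter

/-- A finite family of nonoverlapping subintervals of `[0,1]`, each given as its pair of
endpoints: every interval is nondegenerate, contained in `[0,1]`, and any two of them
have disjoint interiors. -/
def Nonoverlapping (n : ℕ) (I : Fin n → ℝ × ℝ) : Prop :=
  (∀ i, 0 ≤ (I i).1 ∧ (I i).1 < (I i).2 ∧ (I i).2 ≤ 1) ∧
    ∀ i j, i ≠ j → (I i).2 ≤ (I j).1 ∨ (I j).2 ≤ (I i).1

/-- The `p`-`Λ`-variation `V_{ΛBV^p}(f)` of `f : [0,1] → ℝ`, as a value in `ℝ≥0∞`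
(`Lam i` plays the role of `λ_{i+1}`). -/
noncomputable def pLamVar (Lam : ℕ → ℝ) (p : ℝ) (f : ℝ → ℝ) : ℝ≥0∞ :=
  ⨆ (n : ℕ) (I : Fin n → ℝ × ℝ) (_ : Nonoverlapping n I),
    ENNReal.ofReal ((∑ i, |f (I i).2 - f (I i).1| ^ p / Lam i) ^ (1 / p))

/-- The generalized Wiener variation `V(f, q; δ)`, as a value in `ℝ≥0∞`. -/
noncomputable def wienerVar (q δ : ℕ → ℝ) (f : ℝ → ℝ) : ℝ≥0∞ :=
  ⨆ (n : ℕ) (s : ℕ) (I : Fin s → ℝ × ℝ) (_ : Nonoverlapping s I)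
    (_ : ∀ k, 1 / δ n ≤ (I k).2 - (I k).1),
    ENNReal.ofReal ((∑ k, |f (I k).2 - f (I k).1| ^ q n) ^ (1 / q n))

/-!
Put `w i = 1 / λ_i` and `W k = ∑_{i<k} w i`. A nonincreasing sequence is a positive combination of
indicators of initial segments, so for `p ≤ q` Minkowski's inequality reduces
`‖b‖_q ≤ C (∑ b_i ^ p w_i)^(1/p)` to those indicators, where it says `k^(1/q) ≤ C W(k)^(1/p)`; for
`q ≤ p` the power mean and Chebyshev inequalities reduce it to the longest segment alone. Applied to
the increments of `f` over at most `δ n` intervals, sorted decreasingly, this gives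
`wienerVar q δ f ≤ C * pLamVar Lam p f`.

If instead the ratios `k^(1/q n) / W(k)^(1/p)` with `k ≤ δ n` are unbounded, pick `m_j` along which
they blow up and let `F` be the sum over `j` of `2⁻ʲ / W(m_j)` times the indicator of the grid
`{i / m_j : i < m_j}`. Then `f = F^(1/p)` has finite `p`-`Λ`-variation. It vanishes at irrational
points, so pairing each grid point with an irrational point slightly to its right gives `m_j`
intervals on which the increments of `f` are uniformly large.
-/

open scoped NNReal

section OrderedSums

open Finset

lemma sum_le_sum_range_card {w : ℕ → ℝ} (hw : Antitone w) (T : Finset ℕ) :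
    ∑ i ∈ T, w i ≤ ∑ i ∈ range T.card, w i := by
  induction T using Finset.induction_on_max with
  | empty => simp
  | insert a T hlt ih =>
    have ha : a ∉ T := fun h => lt_irrefl _ (hlt a h)
    have hcard : T.card ≤ a := by
      simpa using card_le_card (t := range a) fun x hx => mem_range.2 (hlt x hx)
    rw [sum_insert ha, card_insert_of_notMem ha, sum_range_succ]
    linarith [hw hcard]

lemma Lp_add_const_le {ι : Type*} (s : Finset ι) {f : ι → ℝ} {c r : ℝ} (hr : 1 ≤ r)
    (hf : ∀ i ∈ s, 0 ≤ f i) (hc : 0 ≤ c) :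
    (∑ i ∈ s, (f i + c) ^ r) ^ (1 / r) ≤
      (∑ i ∈ s, f i ^ r) ^ (1 / r) + c * (s.card : ℝ) ^ (1 / r) := by
  have hconst : (∑ _i ∈ s, c ^ r) ^ (1 / r) = c * (s.card : ℝ) ^ (1 / r) := by
    rw [sum_const, nsmul_eq_mul, Real.mul_rpow (by positivity) (by positivity), one_div,
      Real.rpow_rpow_inv hc (by positivity), mul_comm]
  exact hconst ▸ Real.Lp_add_le_of_nonneg s hr hf fun _ _ => hc

variable {w y : ℕ → ℝ} {r M : ℝ}

lemma Lp_sub_const_le_mul_sum (hr : 1 ≤ r) (hy : Antitone y) {s : ℕ}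
    (hM : ∀ k, 1 ≤ k → k ≤ s → (k : ℝ) ^ (1 / r) ≤ M * ∑ i ∈ range k, w i) {c : ℝ}
    (hc : ∀ i < s, c ≤ y i) :
    (∑ i ∈ range s, (y i - c) ^ r) ^ (1 / r) ≤ M * ∑ i ∈ range s, (y i - c) * w i := by
  have hr0 : r ≠ 0 := by positivity
  induction s generalizing c with
  | zero => simp [hr0]
  | succ s ih =>
    have hcs : 0 ≤ y s - c := sub_nonneg.2 (hc s s.lt_succ_self)
    have hys : ∀ i ∈ range (s + 1), 0 ≤ y i - y s := fun i hi =>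
      sub_nonneg.2 (hy (Nat.lt_succ_iff.1 (mem_range.1 hi)))
    have hprev := ih (fun k h1 hk => hM k h1 (hk.trans s.le_succ)) fun i hi => hy hi.le
    have hsegment := mul_le_mul_of_nonneg_left (hM (s + 1) (by omega) le_rfl) hcs
    calc (∑ i ∈ range (s + 1), (y i - c) ^ r) ^ (1 / r)
        = (∑ i ∈ range (s + 1), ((y i - y s) + (y s - c)) ^ r) ^ (1 / r) := by
          simp only [sub_add_sub_cancel]
      _ ≤ (∑ i ∈ range (s + 1), (y i - y s) ^ r) ^ (1 / r) +
            (y s - c) * ((s + 1 : ℕ) : ℝ) ^ (1 / r) := by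
          simpa only [card_range] using Lp_add_const_le (range (s + 1)) hr hys hcs
      _ = (∑ i ∈ range s, (y i - y s) ^ r) ^ (1 / r) +
            (y s - c) * ((s + 1 : ℕ) : ℝ) ^ (1 / r) := by
          rw [sum_range_succ, sub_self, Real.zero_rpow hr0, add_zero]
      _ ≤ M * ∑ i ∈ range s, (y i - y s) * w i +
            (y s - c) * (M * ∑ i ∈ range (s + 1), w i) := add_le_add hprev hsegment
      _ = M * (∑ i ∈ range (s + 1), (y i - y s) * w i +
            ∑ i ∈ range (s + 1), (y s - c) * w i) := by
          rw [sum_range_succ (fun i => (y i - y s) * w i), ← mul_sum]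
          ring
      _ = M * ∑ i ∈ range (s + 1), (y i - c) * w i := by
          simp only [← sum_add_distrib, ← add_mul, sub_add_sub_cancel]

lemma Lp_le_mul_sum_of_le_one (hr : 0 < r) (hr1 : r ≤ 1) (hy : Antitone y) (hy0 : ∀ i, 0 ≤ y i)
    (hw : Antitone w) (hw0 : ∀ i, 0 ≤ w i) {s : ℕ} (hs : 1 ≤ s)
    (hM : (s : ℝ) ^ (1 / r) ≤ M * ∑ i ∈ range s, w i) :
    (∑ i ∈ range s, y i ^ r) ^ (1 / r) ≤ M * ∑ i ∈ range s, y i * w i := by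
  have hs0 : (0 : ℝ) < s := by exact_mod_cast hs
  have hyw : 0 ≤ ∑ i ∈ range s, y i * w i := sum_nonneg fun i _ => mul_nonneg (hy0 i) (hw0 i)
  have hW : 0 < ∑ i ∈ range s, w i :=
    (sum_nonneg fun i _ => hw0 i).lt_of_ne' fun h =>
      (Real.rpow_pos_of_pos hs0 (1 / r)).not_ge (by simpa [h] using hM)
  have power_mean :
      (∑ i ∈ range s, y i ^ r) ^ (1 / r) ≤ (s : ℝ) ^ (1 / r - 1) * ∑ i ∈ range s, y i := by
    have h := Real.rpow_sum_le_const_mul_sum_rpow_of_nonneg (range s) ((one_le_div hr).2 hr1)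
      fun i _ => Real.rpow_nonneg (hy0 i) r
    simpa only [card_range, one_div, Real.rpow_rpow_inv (hy0 _) hr.ne'] using h
  have chebyshev :
      (∑ i ∈ range s, y i) * ∑ i ∈ range s, w i ≤ s * ∑ i ∈ range s, y i * w i := by
    simpa only [card_range] using
      ((hy.monovary hw).monovaryOn (range s)).sum_mul_sum_le_card_mul_sum
  refine le_of_mul_le_mul_right ?_ hW
  calc (∑ i ∈ range s, y i ^ r) ^ (1 / r) * ∑ i ∈ range s, w i
      ≤ (s : ℝ) ^ (1 / r - 1) * (∑ i ∈ range s, y i) * ∑ i ∈ range s, w i := by gcongr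
    _ ≤ (s : ℝ) ^ (1 / r - 1) * (s * ∑ i ∈ range s, y i * w i) := by
        rw [mul_assoc]
        gcongr
    _ = (s : ℝ) ^ (1 / r) * ∑ i ∈ range s, y i * w i := by
        rw [← mul_assoc, Real.rpow_sub_one hs0.ne', div_mul_cancel₀ _ hs0.ne']
    _ ≤ M * (∑ i ∈ range s, w i) * ∑ i ∈ range s, y i * w i := by gcongr
    _ = M * (∑ i ∈ range s, y i * w i) * ∑ i ∈ range s, w i := by ring

lemma Lp_le_mul_sum_of_antitone (hr : 0 < r) (hy : Antitone y) (hy0 : ∀ i, 0 ≤ y i)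
    (hw : Antitone w) (hw0 : ∀ i, 0 ≤ w i) {s : ℕ}
    (hM : ∀ k, 1 ≤ k → k ≤ s → (k : ℝ) ^ (1 / r) ≤ M * ∑ i ∈ range k, w i) :
    (∑ i ∈ range s, y i ^ r) ^ (1 / r) ≤ M * ∑ i ∈ range s, y i * w i := by
  rcases le_total 1 r with hr1 | hr1
  · simpa only [sub_zero] using Lp_sub_const_le_mul_sum hr1 hy hM fun i _ => hy0 i
  rcases Nat.eq_zero_or_pos s with rfl | hs
  · simp [hr.ne']
  · exact Lp_le_mul_sum_of_le_one hr hr1 hy hy0 hw hw0 hs (hM s hs le_rfl)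

end OrderedSums

section GrowthRatio

open Finset

/-- The quotient `k^(1/q) / (∑_{i<k} w i)^(1/p)` of the `ℓ^q` norm by the `w`-weighted `ℓ^p` norm of
the indicator of the first `k` indices. The weights of interest are `w i = 1 / λ_i`. -/
noncomputable def growthRatio (w : ℕ → ℝ) (p q : ℝ) (k : ℕ) : ℝ :=
  (k : ℝ) ^ (1 / q) / (∑ i ∈ range k, w i) ^ (1 / p)

variable {w : ℕ → ℝ} {p q : ℝ}

lemma sum_range_pos_of_one_le (hw : ∀ i, 0 < w i) {k : ℕ} (hk : 1 ≤ k) :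
    0 < ∑ i ∈ range k, w i :=
  sum_pos (fun i _ => hw i) (nonempty_range_iff.2 (by omega))

lemma growthRatio_rpow (hw : ∀ i, 0 ≤ w i) (hp : 0 < p) (k : ℕ) :
    growthRatio w p q k ^ p = (k : ℝ) ^ (1 / (q / p)) / ∑ i ∈ range k, w i := by
  have hW : 0 ≤ ∑ i ∈ range k, w i := sum_nonneg fun i _ => hw i
  rw [growthRatio, Real.div_rpow (by positivity) (by positivity), one_div p,
    Real.rpow_inv_rpow hW hp.ne', ← Real.rpow_mul (by positivity), one_div_div, one_div_mul_eq_div]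

lemma Lp_le_mul_weighted_Lp_of_growthRatio_le (hw : Antitone w) (hw0 : ∀ i, 0 < w i)
    (hp : 0 < p) (hq : 0 < q) {C : ℝ} (hC : 0 ≤ C) {s : ℕ}
    (hR : ∀ k, 1 ≤ k → k ≤ s → growthRatio w p q k ≤ C)
    {b : ℕ → ℝ} (hb : Antitone b) (hb0 : ∀ i, 0 ≤ b i) :
    (∑ i ∈ range s, b i ^ q) ^ (1 / q) ≤ C * (∑ i ∈ range s, b i ^ p * w i) ^ (1 / p) := by
  have hsum : 0 ≤ ∑ i ∈ range s, b i ^ q := sum_nonneg fun i _ => Real.rpow_nonneg (hb0 i) q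
  have hwsum : 0 ≤ ∑ i ∈ range s, b i ^ p * w i :=
    sum_nonneg fun i _ => mul_nonneg (Real.rpow_nonneg (hb0 i) p) (hw0 i).le
  have hM : ∀ k, 1 ≤ k → k ≤ s →
      (k : ℝ) ^ (1 / (q / p)) ≤ C ^ p * ∑ i ∈ range k, w i := fun k h1 hk => by
    rw [← div_le_iff₀ (sum_range_pos_of_one_le hw0 h1), ← growthRatio_rpow (fun i => (hw0 i).le) hp]
    refine Real.rpow_le_rpow ?_ (hR k h1 hk) hp.le
    exact div_nonneg (by positivity) (Real.rpow_nonneg (sum_nonneg fun i _ => (hw0 i).le) _)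
  have key := Lp_le_mul_sum_of_antitone (div_pos hq hp)
    (fun i j hij => Real.rpow_le_rpow (hb0 j) (hb hij) hp.le)
    (fun i => Real.rpow_nonneg (hb0 i) p) hw (fun i => (hw0 i).le) hM
  refine (Real.rpow_le_rpow_iff (by positivity) (by positivity) hp).1 ?_
  calc ((∑ i ∈ range s, b i ^ q) ^ (1 / q)) ^ p
      = (∑ i ∈ range s, (b i ^ p) ^ (q / p)) ^ (1 / (q / p)) := by
        simp only [← Real.rpow_mul (hb0 _), mul_div_cancel₀ q hp.ne', ← Real.rpow_mul hsum,
          one_div_div, one_div_mul_eq_div]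
    _ ≤ C ^ p * ∑ i ∈ range s, b i ^ p * w i := key
    _ = (C * (∑ i ∈ range s, b i ^ p * w i) ^ (1 / p)) ^ p := by
        rw [Real.mul_rpow hC (by positivity), one_div, Real.rpow_inv_rpow hwsum hp.ne']

lemma growthRatio_succ_le (hw : ∀ i, 0 < w i) (hp : 0 < p) {q₀ : ℝ} (hq₀ : 0 < q₀) (hq : q₀ ≤ q)
    {m : ℕ} (hm : 1 ≤ m) :
    growthRatio w p q (m + 1) ≤ 2 ^ (1 / q₀) * growthRatio w p q m := by
  have hq0 : 0 < q := hq₀.trans_le hq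
  have hW := sum_range_pos_of_one_le hw hm
  have hm1 : (1 : ℝ) ≤ m := by exact_mod_cast hm
  have hnum : ((m + 1 : ℕ) : ℝ) ^ (1 / q) ≤ 2 ^ (1 / q₀) * (m : ℝ) ^ (1 / q) := calc
    ((m + 1 : ℕ) : ℝ) ^ (1 / q) ≤ (2 * m : ℝ) ^ (1 / q) := by
        gcongr
        push_cast
        linarith
    _ = 2 ^ (1 / q) * (m : ℝ) ^ (1 / q) := Real.mul_rpow (by norm_num) (by positivity)
    _ ≤ 2 ^ (1 / q₀) * (m : ℝ) ^ (1 / q) := by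
        gcongr
        norm_num
  have hden : ∑ i ∈ range m, w i ≤ ∑ i ∈ range (m + 1), w i := by
    rw [sum_range_succ]
    linarith [hw m]
  rw [growthRatio, growthRatio, ← mul_div_assoc]
  gcongr

/-- Replacing `k` by `m = k - 1` leaves room for `m` grid steps of length greater than `1 / δ n`. -/
lemma exists_lt_growthRatio_of_unbounded {q δ : ℕ → ℝ} {q₀ : ℝ} (hw : ∀ i, 0 < w i) (hp : 0 < p)
    (hq₀ : 0 < q₀) (hq : ∀ n, q₀ ≤ q n)
    (hunb : ∀ C : ℝ, ∃ n k : ℕ, 1 ≤ k ∧ (k : ℝ) ≤ δ n ∧ C < growthRatio w p (q n) k) (D : ℝ) :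
    ∃ n m : ℕ, 1 ≤ m ∧ ((m + 1 : ℕ) : ℝ) ≤ δ n ∧ D < growthRatio w p (q n) m := by
  obtain ⟨n, k, hk1, hkδ, hk⟩ := hunb (max (2 ^ (1 / q₀) * D) (1 / w 0 ^ (1 / p)))
  obtain ⟨hD, hw0⟩ := max_lt_iff.1 hk
  have hk_ne : k ≠ 1 := by
    rintro rfl
    simp [growthRatio] at hw0
  obtain ⟨m, rfl⟩ := Nat.exists_eq_add_of_le' hk1
  have hm : 1 ≤ m := by omega
  exact ⟨n, m, hm, hkδ, lt_of_mul_lt_mul_left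
    (hD.trans_le (growthRatio_succ_le hw hp hq₀ (hq n) hm)) (by positivity)⟩

end GrowthRatio

namespace Nonoverlapping

variable {n : ℕ} {I : Fin n → ℝ × ℝ}

lemma comp_injective (hI : Nonoverlapping n I) {σ : Fin n → Fin n}
    (hσ : Function.Injective σ) : Nonoverlapping n (I ∘ σ) :=
  ⟨fun i => hI.1 (σ i), fun _ _ hij => hI.2 _ _ (hσ.ne hij)⟩

lemma injective_fst (hI : Nonoverlapping n I) : Function.Injective fun i => (I i).1 := by
  intro i j (hij : (I i).1 = (I j).1)
  by_contra hne
  rcases hI.2 i j hne with h | h <;> linarith [(hI.1 i).2.1, (hI.1 j).2.1]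

lemma injective_snd (hI : Nonoverlapping n I) : Function.Injective fun i => (I i).2 := by
  intro i j (hij : (I i).2 = (I j).2)
  by_contra hne
  rcases hI.2 i j hne with h | h <;> linarith [(hI.1 i).2.1, (hI.1 j).2.1]

lemma sum_length_le_one (hI : Nonoverlapping n I) : ∑ i, ((I i).2 - (I i).1) ≤ 1 := by
  have hdisj : Pairwise (Function.onFun Disjoint fun i => Set.Ioc (I i).1 (I i).2) := by
    intro i j hij
    rw [Function.onFun, Set.disjoint_left]
    rintro x ⟨_, _⟩ ⟨_, _⟩
    rcases hI.2 i j hij with h | h <;> linarith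
  have hsub : ⋃ i, Set.Ioc (I i).1 (I i).2 ⊆ Set.Icc 0 1 :=
    Set.iUnion_subset fun i x hx => ⟨(hI.1 i).1.trans hx.1.le, hx.2.trans (hI.1 i).2.2⟩
  have hvol := MeasureTheory.measure_mono (μ := MeasureTheory.volume) hsub
  rw [MeasureTheory.measure_iUnion hdisj fun _ => measurableSet_Ioc, tsum_fintype] at hvol
  simp only [Real.volume_Ioc, Real.volume_Icc, sub_zero] at hvol
  rw [← ENNReal.ofReal_sum_of_nonneg fun i _ => (sub_pos.2 (hI.1 i).2.1).le] at hvol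
  exact (ENNReal.ofReal_le_ofReal_iff zero_le_one).1 hvol

lemma card_le (hI : Nonoverlapping n I) {d : ℝ} (hd : 0 < d)
    (hlen : ∀ i, 1 / d ≤ (I i).2 - (I i).1) : (n : ℝ) ≤ d := by
  have h : (n : ℝ) * (1 / d) ≤ ∑ i, ((I i).2 - (I i).1) := by
    simpa using Finset.card_nsmul_le_sum Finset.univ _ _ fun i _ => hlen i
  rw [mul_one_div] at h
  exact (div_le_one hd).1 (h.trans hI.sum_length_le_one)

end Nonoverlapping

section UpperBound

variable {Lam : ℕ → ℝ} {p : ℝ}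

lemma antitone_one_div_of_pos (hLpos : ∀ i, 0 < Lam i) (hLmono : Monotone Lam) :
    Antitone fun i => 1 / Lam i :=
  fun i _ hij => one_div_le_one_div_of_le (hLpos i) (hLmono hij)

lemma exists_perm_antitone_extension {s : ℕ} {a : Fin s → ℝ} (ha : ∀ i, 0 ≤ a i) :
    ∃ (σ : Equiv.Perm (Fin s)) (b : ℕ → ℝ),
      Antitone b ∧ (∀ i, 0 ≤ b i) ∧ ∀ i : Fin s, b i = a (σ i) := by
  set σ := Tuple.sort fun i => -a i
  have hσ : Antitone (a ∘ σ) := fun i j hij =>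
    neg_le_neg_iff.1 (Tuple.monotone_sort (fun i => -a i) hij)
  have hb0 : ∀ i : ℕ, 0 ≤ if h : i < s then a (σ ⟨i, h⟩) else 0 := fun i => by
    split_ifs
    exacts [ha _, le_rfl]
  refine ⟨σ, fun i => if h : i < s then a (σ ⟨i, h⟩) else 0, fun i j hij => ?_, hb0, by simp⟩
  by_cases hj : j < s
  · simpa [hj, hij.trans_lt hj] using hσ (show (⟨i, hij.trans_lt hj⟩ : Fin s) ≤ ⟨j, hj⟩ from hij)
  · simpa [hj] using hb0 i

theorem wienerVar_le_mul_pLamVar {q δ : ℕ → ℝ} (hLpos : ∀ i, 0 < Lam i) (hLmono : Monotone Lam)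
    (hp : 0 < p) (hq : ∀ n, 0 < q n) (hδ : ∀ n, 0 < δ n) {C : ℝ≥0}
    (hC : ∀ n k : ℕ, 1 ≤ k → (k : ℝ) ≤ δ n → growthRatio (fun i => 1 / Lam i) p (q n) k ≤ C)
    (f : ℝ → ℝ) : wienerVar q δ f ≤ C * pLamVar Lam p f := by
  refine iSup_le fun n => iSup_le fun s => iSup_le fun I => iSup_le fun hI => iSup_le fun hlen => ?_
  have hs : (s : ℝ) ≤ δ n := hI.card_le (hδ n) hlen
  obtain ⟨σ, b, hb, hb0, hbσ⟩ :=
    exists_perm_antitone_extension fun i => abs_nonneg (f (I i).2 - f (I i).1)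
  have hineq := Lp_le_mul_weighted_Lp_of_growthRatio_le (antitone_one_div_of_pos hLpos hLmono)
    (fun i => one_div_pos.2 (hLpos i)) hp (hq n) C.coe_nonneg
    (fun k h1 hk => hC n k h1 ((Nat.cast_le.2 hk).trans hs)) hb hb0
  rw [← Fin.sum_univ_eq_sum_range (fun i => b i ^ q n),
    ← Fin.sum_univ_eq_sum_range (fun i => b i ^ p * (1 / Lam i))] at hineq
  simp only [hbσ, mul_one_div] at hineq
  rw [Equiv.sum_comp σ fun i => |f (I i).2 - f (I i).1| ^ q n] at hineq
  refine (ENNReal.ofReal_le_ofReal hineq).trans ?_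
  rw [ENNReal.ofReal_mul C.coe_nonneg, ENNReal.ofReal_coe_nnreal]
  gcongr
  exact le_iSup_of_le s <| le_iSup_of_le (I ∘ σ) <|
    le_iSup_of_le (hI.comp_injective σ.injective) le_rfl

end UpperBound

section IndicatorSum

variable {α : Type*} {S : ℕ → Finset α} {c : ℕ → ℝ}

/-- The superposition `∑_j c j · 1_{S j}` of indicators of finite sets. With the `S j` finer and
finer grids, its `p`-th root is the function of finite `p`-`Λ`-variation that need not have finite
Wiener variation. -/
noncomputable def indicatorSum (S : ℕ → Finset α) (c : ℕ → ℝ) (x : α) : ℝ :=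
  ∑' j, (S j : Set α).indicator (fun _ => c j) x

lemma indicator_const_nonneg (hc0 : ∀ j, 0 ≤ c j) (x : α) (j : ℕ) :
    0 ≤ (S j : Set α).indicator (fun _ => c j) x :=
  Set.indicator_nonneg (fun _ _ => hc0 j) x

lemma summable_indicator_const (hc : Summable c) (hc0 : ∀ j, 0 ≤ c j) (x : α) :
    Summable fun j => (S j : Set α).indicator (fun _ => c j) x :=
  .of_nonneg_of_le (indicator_const_nonneg hc0 x)
    (fun j => Set.indicator_le_self' (fun _ _ => hc0 j) x) hc

lemma indicatorSum_nonneg (hc0 : ∀ j, 0 ≤ c j) (x : α) : 0 ≤ indicatorSum S c x :=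
  tsum_nonneg (indicator_const_nonneg hc0 x)

lemma le_indicatorSum (hc : Summable c) (hc0 : ∀ j, 0 ≤ c j) {x : α} {j : ℕ} (hx : x ∈ S j) :
    c j ≤ indicatorSum S c x := by
  calc c j = (S j : Set α).indicator (fun _ => c j) x := by simp [hx]
    _ ≤ indicatorSum S c x :=
      (summable_indicator_const hc hc0 x).le_tsum j fun i _ => indicator_const_nonneg hc0 x i

lemma indicatorSum_eq_zero {x : α} (hx : ∀ j, x ∉ S j) : indicatorSum S c x = 0 := by
  simp [indicatorSum, hx]

variable {w : ℕ → ℝ} {n : ℕ} {x : Fin n → α}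

lemma sum_indicator_mul_le (hw : Antitone w) (hw0 : ∀ i, 0 ≤ w i) (T : Finset α) {a : ℝ}
    (ha : 0 ≤ a) (hx : Function.Injective x) :
    ∑ i : Fin n, (T : Set α).indicator (fun _ => a) (x i) * w i ≤
      a * ∑ i ∈ Finset.range T.card, w i := by
  classical
  set hits : Finset (Fin n) := Finset.univ.filter fun i => x i ∈ T
  have hcard : hits.card ≤ T.card :=
    Finset.card_le_card_of_injOn x (fun i hi => by simpa [hits] using hi) hx.injOn
  calc ∑ i : Fin n, (T : Set α).indicator (fun _ => a) (x i) * w i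
      = a * ∑ i ∈ hits, w i := by
        simp [hits, Finset.sum_filter, Finset.mul_sum, Set.indicator_apply]
    _ = a * ∑ i ∈ hits.map Fin.valEmbedding, w i := by simp
    _ ≤ a * ∑ i ∈ Finset.range hits.card, w i := by
        refine mul_le_mul_of_nonneg_left ?_ ha
        simpa only [Finset.card_map] using sum_le_sum_range_card hw (hits.map Fin.valEmbedding)
    _ ≤ a * ∑ i ∈ Finset.range T.card, w i := by
        gcongr
        exact fun i _ _ => hw0 i

lemma sum_indicatorSum_mul_le (hw : Antitone w) (hw0 : ∀ i, 0 ≤ w i) (hc : Summable c)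
    (hc0 : ∀ j, 0 ≤ c j) (hcw : Summable fun j => c j * ∑ i ∈ Finset.range (S j).card, w i)
    (hx : Function.Injective x) :
    ∑ i : Fin n, indicatorSum S c (x i) * w i ≤
      ∑' j, c j * ∑ i ∈ Finset.range (S j).card, w i := by
  have hsum (i : Fin n) : Summable fun j => (S j : Set α).indicator (fun _ => c j) (x i) * w i :=
    (summable_indicator_const hc hc0 (x i)).mul_right (w i)
  calc ∑ i : Fin n, indicatorSum S c (x i) * w i
      = ∑' j, ∑ i : Fin n, (S j : Set α).indicator (fun _ => c j) (x i) * w i := by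
        simp only [Summable.tsum_finsetSum fun i _ => hsum i, indicatorSum, tsum_mul_right]
    _ ≤ ∑' j, c j * ∑ i ∈ Finset.range (S j).card, w i :=
        (summable_sum fun i _ => hsum i).tsum_le_tsum
          (fun j => sum_indicator_mul_le hw hw0 (S j) (hc0 j) hx) hcw

end IndicatorSum

section RootVariation

variable {Lam : ℕ → ℝ} {p : ℝ}

lemma abs_rpow_one_div_sub_rpow_le_add (hp : 0 < p) {u v : ℝ} (hu : 0 ≤ u) (hv : 0 ≤ v) :
    |u ^ (1 / p) - v ^ (1 / p)| ^ p ≤ u + v := by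
  have h : |u ^ (1 / p) - v ^ (1 / p)| ≤ (u + v) ^ (1 / p) := by
    refine abs_sub_le_of_nonneg_of_le ?_ ?_ ?_ ?_
    any_goals positivity
    all_goals gcongr; linarith
  rw [one_div] at h ⊢
  exact (Real.le_rpow_inv_iff_of_pos (abs_nonneg _) (by positivity) hp).1 h

lemma pLamVar_rpow_one_div_le (hLpos : ∀ i, 0 < Lam i) (hp : 0 < p) {F : ℝ → ℝ}
    (hF : ∀ x, 0 ≤ F x) {B : ℝ}
    (hB : ∀ (n : ℕ) (x : Fin n → ℝ), Function.Injective x → ∑ i, F (x i) * (1 / Lam i) ≤ B) :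
    pLamVar Lam p (fun x => F x ^ (1 / p)) ≤ ENNReal.ofReal ((B + B) ^ (1 / p)) := by
  refine iSup_le fun n => iSup_le fun I => iSup_le fun hI => ENNReal.ofReal_le_ofReal ?_
  refine Real.rpow_le_rpow
    (Finset.sum_nonneg fun i _ => div_nonneg (by positivity) (hLpos i).le) ?_ (by positivity)
  calc ∑ i, |F (I i).2 ^ (1 / p) - F (I i).1 ^ (1 / p)| ^ p / Lam i
      ≤ ∑ i, (F (I i).2 + F (I i).1) / Lam i := by
        gcongr with i
        exacts [(hLpos i).le, abs_rpow_one_div_sub_rpow_le_add hp (hF _) (hF _)]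
    _ = ∑ i, F (I i).2 * (1 / Lam i) + ∑ i, F (I i).1 * (1 / Lam i) := by
        simp only [mul_one_div, add_div, Finset.sum_add_distrib]
    _ ≤ B + B := add_le_add (hB n _ hI.injective_snd) (hB n _ hI.injective_fst)

end RootVariation

section Grid

/-- The grid `{i / m : i < m}` of the `m` left endpoints of the equipartition of `[0, 1)`. -/
noncomputable def gridPoints (m : ℕ) : Finset ℝ :=
  (Finset.range m).image fun i : ℕ => (i : ℝ) / m

lemma card_gridPoints (m : ℕ) : (gridPoints m).card = m := by
  rcases eq_or_ne m 0 with rfl | hm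
  · simp [gridPoints]
  · rw [gridPoints, Finset.card_image_of_injective _ fun i j hij => ?_, Finset.card_range]
    have hm' : (m : ℝ) ≠ 0 := by exact_mod_cast hm
    exact_mod_cast (div_left_inj' hm').1 hij

lemma irrational_notMem_gridPoints {x : ℝ} (hx : Irrational x) (m : ℕ) : x ∉ gridPoints m := by
  simp only [gridPoints, Finset.mem_image, not_exists, not_and]
  rintro i - rfl
  exact hx ⟨(i : ℚ) / m, by push_cast; rfl⟩

/-- The intervals `[i / m, i / m + η]` for `i < m`. -/
noncomputable def gridIntervals (m : ℕ) (η : ℝ) (i : Fin m) : ℝ × ℝ :=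
  ((i : ℝ) / m, (i : ℝ) / m + η)

lemma nonoverlapping_gridIntervals {m : ℕ} {η : ℝ} (hη : 0 < η) (hηm : η ≤ 1 / m) :
    Nonoverlapping m (gridIntervals m η) := by
  have hstep : ∀ a b : ℕ, a < b → (a : ℝ) / m + η ≤ (b : ℝ) / m := fun a b hab => calc
    (a : ℝ) / m + η ≤ (a : ℝ) / m + 1 / m := by gcongr
    _ = ((a + 1 : ℕ) : ℝ) / m := by push_cast; ring
    _ ≤ (b : ℝ) / m := by gcongr; exact hab
  refine ⟨fun i => ⟨by simp only [gridIntervals]; positivity, lt_add_of_pos_right _ hη, ?_⟩,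
    fun i j hij => ?_⟩
  · exact (hstep i m i.2).trans (div_self_le_one _)
  · exact (lt_or_gt_of_ne hij).imp (hstep i j) (hstep j i)

variable {q δ : ℕ → ℝ} {f : ℝ → ℝ} {n m : ℕ} {a : ℝ}

lemma ofReal_card_rpow_mul_le_wienerVar (hq : 0 < q n) {I : Fin m → ℝ × ℝ}
    (hI : Nonoverlapping m I) (hlen : ∀ k, 1 / δ n ≤ (I k).2 - (I k).1) (ha : 0 ≤ a)
    (hf : ∀ k, a ≤ |f (I k).2 - f (I k).1|) :
    ENNReal.ofReal ((m : ℝ) ^ (1 / q n) * a) ≤ wienerVar q δ f := by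
  refine le_iSup_of_le n <| le_iSup_of_le m <| le_iSup_of_le I <| le_iSup_of_le hI <|
    le_iSup_of_le hlen <| ENNReal.ofReal_le_ofReal ?_
  calc (m : ℝ) ^ (1 / q n) * a = (∑ _k : Fin m, a ^ q n) ^ (1 / q n) := by
        rw [Fin.sum_const, nsmul_eq_mul, Real.mul_rpow (by positivity) (by positivity), one_div,
          Real.rpow_rpow_inv ha hq.ne']
    _ ≤ (∑ k, |f (I k).2 - f (I k).1| ^ q n) ^ (1 / q n) := by
        gcongr with k
        exact hf k

lemma ofReal_card_rpow_mul_le_wienerVar_of_grid (hq : 0 < q n) (hm : 1 ≤ m)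
    (hmδ : ((m + 1 : ℕ) : ℝ) ≤ δ n) (hirr : ∀ x, Irrational x → f x = 0) (ha : 0 ≤ a)
    (hgrid : ∀ x ∈ gridPoints m, a ≤ f x) :
    ENNReal.ofReal ((m : ℝ) ^ (1 / q n) * a) ≤ wienerVar q δ f := by
  have hm0 : (0 : ℝ) < m := by exact_mod_cast hm
  obtain ⟨η, hη, hη_gt, hη_lt⟩ := exists_irrational_btwn
    (one_div_lt_one_div_of_lt hm0 (Nat.cast_lt.2 m.lt_succ_self))
  have hη0 : 0 < η := lt_trans (by positivity) hη_gt
  refine ofReal_card_rpow_mul_le_wienerVar hq (nonoverlapping_gridIntervals hη0 hη_lt.le)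
    (fun k => ?_) ha fun k => ?_
  · calc 1 / δ n ≤ 1 / ((m + 1 : ℕ) : ℝ) := by gcongr
      _ ≤ η := hη_gt.le
      _ = (gridIntervals m η k).2 - (gridIntervals m η k).1 := by simp [gridIntervals]
  · have hright : f (gridIntervals m η k).2 = 0 := hirr _ <| by
      simpa [gridIntervals] using hη.ratCast_add ((k : ℕ) / (m : ℚ))
    have hleft : a ≤ f (gridIntervals m η k).1 :=
      hgrid _ (Finset.mem_image.2 ⟨k, Finset.mem_range.2 k.2, rfl⟩)
    rw [hright, zero_sub, abs_neg]
    exact hleft.trans (le_abs_self _)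

end Grid

section Counterexample

open Finset

/-- The coefficients `2⁻ʲ / W (m j)`, where `W k = ∑_{i<k} w i`. They are chosen so that the
indicators of grids with `m j` points, weighted by them, have summable `w`-weighted sums. -/
noncomputable def gridCoeff (w : ℕ → ℝ) (m : ℕ → ℕ) (j : ℕ) : ℝ :=
  (1 / 2) ^ j / ∑ i ∈ range (m j), w i

/-- The function `(∑_j gridCoeff w m j · 1_{gridPoints (m j)})^(1/p)`, which witnesses that the
inclusion fails when the growth ratios are unbounded along `m`. -/
noncomputable def gridRoot (w : ℕ → ℝ) (p : ℝ) (m : ℕ → ℕ) (x : ℝ) : ℝ :=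
  indicatorSum (fun j => gridPoints (m j)) (gridCoeff w m) x ^ (1 / p)

variable {w : ℕ → ℝ} {m : ℕ → ℕ} {p : ℝ}

lemma gridCoeff_nonneg (hw : ∀ i, 0 ≤ w i) (j : ℕ) : 0 ≤ gridCoeff w m j :=
  div_nonneg (by positivity) (sum_nonneg fun i _ => hw i)

lemma summable_gridCoeff (hw : ∀ i, 0 < w i) (hm : ∀ j, 1 ≤ m j) : Summable (gridCoeff w m) := by
  refine .of_nonneg_of_le (gridCoeff_nonneg fun i => (hw i).le) (fun j => ?_)
    (summable_geometric_two.div_const (w 0))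
  refine div_le_div_of_nonneg_left (by positivity) (hw 0) ?_
  exact single_le_sum (fun i _ => (hw i).le) (mem_range.2 (hm j))

lemma gridCoeff_mul_sum (hw : ∀ i, 0 < w i) (hm : ∀ j, 1 ≤ m j) (j : ℕ) :
    gridCoeff w m j * ∑ i ∈ range (m j), w i = (1 / 2) ^ j :=
  div_mul_cancel₀ _ (sum_range_pos_of_one_le hw (hm j)).ne'

lemma gridRoot_of_irrational (hp : 0 < p) {x : ℝ} (hx : Irrational x) : gridRoot w p m x = 0 := by
  rw [gridRoot, indicatorSum_eq_zero fun j => irrational_notMem_gridPoints hx (m j),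
    Real.zero_rpow (one_div_pos.2 hp).ne']

lemma gridCoeff_rpow_le_gridRoot (hw : ∀ i, 0 < w i) (hm : ∀ j, 1 ≤ m j) (hp : 0 < p) {j : ℕ}
    {x : ℝ} (hx : x ∈ gridPoints (m j)) : gridCoeff w m j ^ (1 / p) ≤ gridRoot w p m x := by
  have hc0 := gridCoeff_nonneg (m := m) fun i => (hw i).le
  exact Real.rpow_le_rpow (hc0 j) (le_indicatorSum (summable_gridCoeff hw hm) hc0 hx)
    (by positivity)

lemma growthRatio_le_wienerVar_gridRoot (hw : ∀ i, 0 < w i) (hm : ∀ j, 1 ≤ m j) (hp : 0 < p)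
    {q δ : ℕ → ℝ} {n j : ℕ} (hq : 0 < q n) (hmδ : ((m j + 1 : ℕ) : ℝ) ≤ δ n) :
    ENNReal.ofReal (growthRatio w p (q n) (m j) * ((1 / 2) ^ j) ^ (1 / p)) ≤
      wienerVar q δ (gridRoot w p m) := by
  have hc0 := gridCoeff_nonneg (m := m) (fun i => (hw i).le) j
  have h := ofReal_card_rpow_mul_le_wienerVar_of_grid hq (hm j) hmδ
    (fun _ hx => gridRoot_of_irrational hp hx) (Real.rpow_nonneg hc0 (1 / p))
    fun _ hx => gridCoeff_rpow_le_gridRoot hw hm hp hx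
  rwa [gridCoeff, Real.div_rpow (by positivity) (sum_range_pos_of_one_le hw (hm j)).le,
    mul_div_left_comm, mul_comm (((1 / 2 : ℝ) ^ j) ^ (1 / p))] at h

lemma pLamVar_gridRoot_lt_top {Lam : ℕ → ℝ} (hLpos : ∀ i, 0 < Lam i) (hLmono : Monotone Lam)
    (hm : ∀ j, 1 ≤ m j) (hp : 0 < p) :
    pLamVar Lam p (gridRoot (fun i => 1 / Lam i) p m) < ⊤ := by
  have hw : ∀ i, 0 < 1 / Lam i := fun i => one_div_pos.2 (hLpos i)
  have hc0 := gridCoeff_nonneg (m := m) fun i => (hw i).le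
  have hcw : ∀ j, gridCoeff (fun i => 1 / Lam i) m j *
      ∑ i ∈ range (gridPoints (m j)).card, 1 / Lam i = (1 / 2) ^ j := fun j => by
    rw [card_gridPoints, gridCoeff_mul_sum hw hm]
  refine (pLamVar_rpow_one_div_le hLpos hp (indicatorSum_nonneg hc0) (B := 2)
    fun n x hx => ?_).trans_lt ENNReal.ofReal_lt_top
  have hsummable : Summable fun j => gridCoeff (fun i => 1 / Lam i) m j *
      ∑ i ∈ range (gridPoints (m j)).card, 1 / Lam i := by
    simpa only [hcw] using summable_geometric_two
  simpa only [hcw, tsum_geometric_two] using sum_indicatorSum_mul_le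
    (antitone_one_div_of_pos hLpos hLmono) (fun i => (hw i).le) (summable_gridCoeff hw hm) hc0
    hsummable hx

theorem exists_pLamVar_lt_top_wienerVar_eq_top {Lam q δ : ℕ → ℝ} {q₀ : ℝ}
    (hLpos : ∀ i, 0 < Lam i) (hLmono : Monotone Lam) (hp : 0 < p) (hq₀ : 0 < q₀)
    (hq : ∀ n, q₀ ≤ q n)
    (hunb : ∀ C : ℝ, ∃ n k : ℕ, 1 ≤ k ∧ (k : ℝ) ≤ δ n ∧
      C < growthRatio (fun i => 1 / Lam i) p (q n) k) :
    ∃ f : ℝ → ℝ, pLamVar Lam p f < ⊤ ∧ wienerVar q δ f = ⊤ := by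
  have hw : ∀ i, 0 < 1 / Lam i := fun i => one_div_pos.2 (hLpos i)
  choose N m hm hmδ hlarge using fun j : ℕ =>
    exists_lt_growthRatio_of_unbounded hw hp hq₀ hq hunb (j / ((1 / 2 : ℝ) ^ j) ^ (1 / p))
  refine ⟨_, pLamVar_gridRoot_lt_top hLpos hLmono hm hp, ENNReal.eq_top_of_forall_nnreal_le ?_⟩
  intro r
  obtain ⟨j, hj⟩ := exists_nat_ge r
  calc (r : ℝ≥0∞) ≤ ENNReal.ofReal j := by
        rw [ENNReal.ofReal_natCast]
        exact_mod_cast hj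
    _ ≤ ENNReal.ofReal (growthRatio (fun i => 1 / Lam i) p (q (N j)) (m j) *
          ((1 / 2) ^ j) ^ (1 / p)) :=
        ENNReal.ofReal_le_ofReal ((div_lt_iff₀ (by positivity)).1 (hlarge j)).le
    _ ≤ wienerVar q δ (gridRoot (fun i => 1 / Lam i) p m) :=
        growthRatio_le_wienerVar_gridRoot hw hm hp (hq₀.trans_le (hq (N j))) (hmδ j)

end Counterexample

lemma limsup_atTop_lt_top_iff {u : ℕ → ℝ≥0∞} (hu : ∀ n, u n < ⊤) :
    limsup u atTop < ⊤ ↔ ⨆ n, u n < ⊤ := by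
  refine ⟨fun h => ?_, limsup_le_iSup.trans_lt⟩
  obtain ⟨M, hM, hM_top⟩ := exists_between h
  obtain ⟨N, hN⟩ := eventually_atTop.1 (eventually_lt_of_limsup_lt hM)
  have hinit : (Finset.range N).sup u < ⊤ :=
    (Finset.sup_lt_iff ENNReal.zero_lt_top).2 fun n _ => hu n
  refine (iSup_le fun n => ?_).trans_lt (max_lt hinit hM_top)
  rcases lt_or_ge n N with hn | hn
  · exact le_max_of_le_left (Finset.le_sup (Finset.mem_range.2 hn))
  · exact le_max_of_le_right (hN n hn).le

lemma limsup_iSup_ofReal_lt_top_iff {a : ℕ → ℕ → ℝ} {δ : ℕ → ℝ} :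
    limsup (fun n => ⨆ (k : ℕ) (_ : 1 ≤ k) (_ : (k : ℝ) ≤ δ n), ENNReal.ofReal (a n k)) atTop < ⊤ ↔
      ∃ C : ℝ≥0, ∀ n k : ℕ, 1 ≤ k → (k : ℝ) ≤ δ n → a n k ≤ C := by
  have hfinite : ∀ n,
      ⨆ (k : ℕ) (_ : 1 ≤ k) (_ : (k : ℝ) ≤ δ n), ENNReal.ofReal (a n k) < ⊤ := fun n => by
    refine lt_of_le_of_lt ?_ ((Finset.sup_lt_iff ENNReal.zero_lt_top).2
      fun k (_ : k ∈ Finset.range (⌊δ n⌋₊ + 1)) => ENNReal.ofReal_lt_top (r := a n k))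
    exact iSup_le fun k => iSup_le fun _ => iSup_le fun hk => Finset.le_sup
      (f := fun k => ENNReal.ofReal (a n k)) (Finset.mem_range_succ_iff.2 (Nat.le_floor hk))
  rw [limsup_atTop_lt_top_iff hfinite]
  constructor
  · intro h
    obtain ⟨C, hC, -⟩ := ENNReal.lt_iff_exists_coe.1 h
    refine ⟨C, fun n k h1 hk => ?_⟩
    rw [← ENNReal.ofReal_le_coe, ← hC]
    exact le_iSup_of_le n <| le_iSup_of_le k <| le_iSup_of_le h1 <| le_iSup_of_le hk le_rfl
  · rintro ⟨C, hC⟩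
    refine (iSup_le fun n => iSup_le fun k => iSup_le fun h1 => iSup_le fun hk => ?_).trans_lt
      (ENNReal.coe_lt_top (r := C))
    exact ENNReal.ofReal_le_coe.2 (hC n k h1 hk)

theorem inclusion_iff_general {Lam q δ : ℕ → ℝ} {p q₀ : ℝ} (hLpos : ∀ i, 0 < Lam i)
    (hLmono : Monotone Lam) (hp : 0 < p) (hq₀ : 0 < q₀) (hq : ∀ n, q₀ ≤ q n)
    (hδ : ∀ n, 0 < δ n) :
    (∀ f : ℝ → ℝ, pLamVar Lam p f < ⊤ → wienerVar q δ f < ⊤) ↔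
      limsup (fun n =>
        ⨆ (k : ℕ) (_ : 1 ≤ k) (_ : (k : ℝ) ≤ δ n),
          ENNReal.ofReal ((k : ℝ) ^ (1 / q n) /
            (∑ i ∈ Finset.range k, 1 / Lam i) ^ (1 / p))) atTop < ⊤ := by
  refine Iff.trans ?_ limsup_iSup_ofReal_lt_top_iff.symm
  constructor
  · intro hincl
    by_contra! hunb
    obtain ⟨f, hf, hf_top⟩ := exists_pLamVar_lt_top_wienerVar_eq_top hLpos hLmono hp hq₀ hq
      fun C => (hunb C.toNNReal).imp fun _ => .imp fun _ ⟨h1, hk, hlt⟩ =>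
        ⟨h1, hk, (Real.le_coe_toNNReal C).trans_lt hlt⟩
    exact (hincl f hf).ne hf_top
  · rintro ⟨C, hC⟩ f hf
    exact (wienerVar_le_mul_pLamVar hLpos hLmono hp (fun n => hq₀.trans_le (hq n)) hδ hC f).trans_lt
      (ENNReal.mul_lt_top ENNReal.coe_lt_top hf)

/-- **Theorem 1.** For `p ∈ [1,∞)`, a `Λ`-sequence `Λ`, an increasing positive sequence `q`
and an increasing unbounded positive sequence `δ`, the inclusion `ΛBV^(p) ⊆ BV(q;δ)` holds
if and only if `limsup_{n→∞} max_{1 ≤ k ≤ δ(n)} k^{1/q(n)} / (∑_{i=1}^k 1/λ_i)^{1/p} < ∞`. -/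
theorem inclusion_iff
    (Lam q δ : ℕ → ℝ) (p : ℝ)
    (hLpos : ∀ i, 0 < Lam i) (hLmono : Monotone Lam)
    (hLdiv : Tendsto (fun n => ∑ i ∈ Finset.range n, 1 / Lam i) atTop atTop)
    (hp : 1 ≤ p)
    (hqpos : ∀ n, 0 < q n) (hq : StrictMono q)
    (hδpos : ∀ n, 0 < δ n) (hδ : StrictMono δ)
    (hδunbdd : Tendsto δ atTop atTop) :
    (∀ f : ℝ → ℝ, pLamVar Lam p f < ⊤ → wienerVar q δ f < ⊤) ↔
      Filter.limsup (fun n =>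
        ⨆ (k : ℕ) (_ : 1 ≤ k) (_ : (k : ℝ) ≤ δ n),
          ENNReal.ofReal ((k : ℝ) ^ (1 / q n) /
            (∑ i ∈ Finset.range k, 1 / Lam i) ^ (1 / p))) atTop < ⊤ :=
  inclusion_iff_general hLpos hLmono (zero_lt_one.trans_le hp) (hqpos 0)
    (fun n => hq.monotone n.zero_le) hδpos
end

section
/- Let s be a positive integer, let q ≥ 1 be a real number, and let x_1 ≥ x_2 ≥ … ≥ x_s ≥ 0 and y_1 ≥ y_2 ≥ … ≥ y_s ≥ 0 be real numbers (with y_1 > 0 so the right-hand side is defined). Then ∑_{j=1}^{s} x_j^q ≤ (∑_{j=1}^{s} x_j y_j)^q · max_{1 ≤ k ≤ s} k / (∑_{j=1}^{k} y_j)^q. -/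
/-!
Taking `x` to be the indicator of the first `k` indices shows that the maximum on the right-hand
side is forced; conversely those indicators suffice. Concavity of `t ↦ t ^ q⁻¹` gives the Lorentz
norm bound `(∑ x_j ^ q) ^ q⁻¹ ≤ ∑ ((j + 1) ^ q⁻¹ - j ^ q⁻¹) x_j`, which is an equality on these
indicators. Its right-hand side is linear in `x`, and the weights have partial sums `k ^ q⁻¹`.
Since `x` is decreasing, summation by parts allows one to compare partial sums of the weights
with those of a multiple of `y`.
-/

open Finset

section ConcaveIncrements

theorem concaveOn_add_le_add_of_mem_segment {𝕜 E β : Type*} [Semiring 𝕜] [PartialOrder 𝕜]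
    [AddCommGroup E] [Module 𝕜 E] [AddCommMonoid β] [PartialOrder β] [IsOrderedAddMonoid β]
    [Module 𝕜 β] {s : Set E} {f : E → β} (hf : ConcaveOn 𝕜 s f) {u v w : E}
    (hu : u ∈ s) (hv : v ∈ s) (hw : w ∈ segment 𝕜 u v) :
    f u + f v ≤ f w + f (u + v - w) := by
  obtain ⟨a, b, ha, hb, hab, rfl⟩ := hw
  have hba : b + a = 1 := by rw [add_comm, hab]
  have reflect : u + v - (a • u + b • v) = b • u + a • v := by
    rw [sub_eq_iff_eq_add, add_add_add_comm, ← add_smul, ← add_smul, hab, hba, one_smul, one_smul]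
  calc f u + f v = (a • f u + b • f v) + (b • f u + a • f v) := by
        rw [add_add_add_comm, ← add_smul, ← add_smul, hab, hba, one_smul, one_smul]
    _ ≤ f (a • u + b • v) + f (b • u + a • v) :=
        add_le_add (hf.2 hu hv ha hb hab) (hf.2 hu hv hb ha hba)
    _ = f (a • u + b • v) + f (u + v - (a • u + b • v)) := by rw [reflect]

variable {𝕜 β : Type*} [Field 𝕜] [LinearOrder 𝕜] [IsStrictOrderedRing 𝕜]
  [AddCommGroup β] [PartialOrder β] [IsOrderedAddMonoid β] [Module 𝕜 β]

theorem concaveOn_map_add_sub_map_le {s : Set 𝕜} {f : 𝕜 → β} (hf : ConcaveOn 𝕜 s f)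
    {u v a : 𝕜} (hu : u ∈ s) (hva : v + a ∈ s) (huv : u ≤ v) (ha : 0 ≤ a) :
    f (v + a) - f v ≤ f (u + a) - f u := by
  have hv : v ∈ segment 𝕜 u (v + a) := by
    rw [segment_eq_Icc (by linarith)]
    exact ⟨huv, by linarith⟩
  have key := concaveOn_add_le_add_of_mem_segment hf hu hva hv
  rw [show u + (v + a) - v = u + a by ring] at key
  rwa [sub_le_sub_iff, add_comm, add_comm (f (u + a))]

theorem concaveOn_map_sum_range_le {f : 𝕜 → β} (hf : ConcaveOn 𝕜 (Set.Ici 0) f) {a : ℕ → 𝕜}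
    {n : ℕ} (ha : AntitoneOn a (Set.Iio n)) (ha₀ : ∀ i < n, 0 ≤ a i) :
    f (∑ j ∈ range n, a j) ≤ f 0 + ∑ j ∈ range n, (f ((j + 1) * a j) - f (j * a j)) := by
  induction n with
  | zero => simp
  | succ n ih =>
    have hn : 0 ≤ a n := ha₀ n n.lt_succ_self
    have hsum : (n : 𝕜) * a n ≤ ∑ j ∈ range n, a j := by
      simpa only [card_range, nsmul_eq_mul] using card_nsmul_le_sum (range n) a (a n)
        fun j hj ↦ ha (Set.mem_Iio.2 (by grind)) (Set.mem_Iio.2 n.lt_succ_self) (by grind)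
    have hna : 0 ≤ (n : 𝕜) * a n := by positivity
    have hstep : f (∑ j ∈ range n, a j + a n) - f (∑ j ∈ range n, a j) ≤
        f ((n + 1) * a n) - f (n * a n) := by
      rw [add_one_mul]
      exact concaveOn_map_add_sub_map_le hf hna (add_nonneg (hna.trans hsum) hn) hsum hn
    have hprev := ih (ha.mono (Set.Iio_subset_Iio n.le_succ)) fun i hi ↦ ha₀ i (by omega)
    rw [sum_range_succ, sum_range_succ, ← add_assoc]
    simpa only [add_sub_cancel] using add_le_add hprev hstep

end ConcaveIncrements

section SummationByParts

variable {R M : Type*} [Ring R] [PartialOrder R] [IsOrderedAddMonoid R]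
  [AddCommGroup M] [PartialOrder M] [IsOrderedAddMonoid M] [Module R M] [PosSMulMono R M]
  {x : ℕ → R} {n : ℕ}

theorem sum_range_smul_nonneg_of_antitoneOn (hx : AntitoneOn x (Set.Iio n))
    (hx₀ : ∀ i < n, 0 ≤ x i) {d : ℕ → M} (hd : ∀ k ∈ Icc 1 n, 0 ≤ ∑ j ∈ range k, d j) :
    0 ≤ ∑ j ∈ range n, x j • d j := by
  rcases n.eq_zero_or_pos with rfl | hn
  · simp
  rw [sum_range_by_parts, sub_nonneg]
  calc ∑ i ∈ range (n - 1), (x (i + 1) - x i) • ∑ j ∈ range (i + 1), d j ≤ 0 := by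
        refine sum_nonpos fun i hi ↦ ?_
        have hdecr : 0 ≤ x i - x (i + 1) :=
          sub_nonneg.2 (hx (Set.mem_Iio.2 (by grind)) (Set.mem_Iio.2 (by grind)) i.le_succ)
        rw [← neg_nonneg, ← neg_smul, neg_sub]
        exact smul_nonneg hdecr (hd _ (by grind))
    _ ≤ x (n - 1) • ∑ j ∈ range n, d j :=
        smul_nonneg (hx₀ _ (by omega)) (hd n (by grind))

theorem sum_range_smul_le_sum_range_smul_of_antitoneOn (hx : AntitoneOn x (Set.Iio n))
    (hx₀ : ∀ i < n, 0 ≤ x i) {d e : ℕ → M}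
    (hde : ∀ k ∈ Icc 1 n, ∑ j ∈ range k, d j ≤ ∑ j ∈ range k, e j) :
    ∑ j ∈ range n, x j • d j ≤ ∑ j ∈ range n, x j • e j := by
  have key := sum_range_smul_nonneg_of_antitoneOn hx hx₀ (d := fun j ↦ e j - d j)
    fun k hk ↦ by simpa only [sum_sub_distrib, sub_nonneg] using hde k hk
  simpa only [smul_sub, sum_sub_distrib, sub_nonneg] using key

end SummationByParts

section LorentzBound

variable {q : ℝ} {x : ℕ → ℝ} {n : ℕ}

theorem rpow_inv_sum_rpow_le_sum_mul_rpow_inv_sub (hq : 1 ≤ q) (hx : AntitoneOn x (Set.Iio n))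
    (hx₀ : ∀ i < n, 0 ≤ x i) :
    (∑ j ∈ range n, x j ^ q) ^ q⁻¹ ≤
      ∑ j ∈ range n, x j * (((j + 1 : ℕ) : ℝ) ^ q⁻¹ - (j : ℝ) ^ q⁻¹) := by
  have hq₀ : 0 < q := by linarith
  have hanti : AntitoneOn (fun j ↦ x j ^ q) (Set.Iio n) := fun i hi j hj hij ↦
    Real.rpow_le_rpow (hx₀ j hj) (hx hi hj hij) hq₀.le
  have hconc := concaveOn_map_sum_range_le
    (Real.concaveOn_rpow (inv_nonneg.2 hq₀.le) (inv_le_one_of_one_le₀ hq)) hanti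
    fun i hi ↦ Real.rpow_nonneg (hx₀ i hi) q
  rw [Real.zero_rpow (inv_ne_zero hq₀.ne'), zero_add] at hconc
  refine hconc.trans_eq (sum_congr rfl fun j hj ↦ ?_)
  have hxj : 0 ≤ x j := hx₀ j (mem_range.1 hj)
  rw [Real.mul_rpow (by positivity) (by positivity), Real.mul_rpow (by positivity) (by positivity),
    Real.rpow_rpow_inv hxj hq₀.ne']
  push_cast
  ring

theorem sum_rpow_le_rpow_sum_mul_of_rpow_inv_le_sum (hq : 1 ≤ q) (hx : AntitoneOn x (Set.Iio n))
    (hx₀ : ∀ i < n, 0 ≤ x i) {z : ℕ → ℝ}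
    (hz : ∀ k ∈ Icc 1 n, (k : ℝ) ^ q⁻¹ ≤ ∑ j ∈ range k, z j) :
    ∑ j ∈ range n, x j ^ q ≤ (∑ j ∈ range n, x j * z j) ^ q := by
  have hq₀ : 0 < q := by linarith
  have hpow : 0 ≤ ∑ j ∈ range n, x j ^ q :=
    sum_nonneg fun j hj ↦ Real.rpow_nonneg (hx₀ j (mem_range.1 hj)) q
  have hpartial : ∀ k ∈ Icc 1 n,
      ∑ j ∈ range k, (((j + 1 : ℕ) : ℝ) ^ q⁻¹ - (j : ℝ) ^ q⁻¹) ≤ ∑ j ∈ range k, z j := by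
    intro k hk
    rw [sum_range_sub fun j : ℕ ↦ (j : ℝ) ^ q⁻¹, Nat.cast_zero,
      Real.zero_rpow (inv_ne_zero hq₀.ne'), sub_zero]
    exact hz k hk
  have hnorm : (∑ j ∈ range n, x j ^ q) ^ q⁻¹ ≤ ∑ j ∈ range n, x j * z j :=
    (rpow_inv_sum_rpow_le_sum_mul_rpow_inv_sub hq hx hx₀).trans
      (sum_range_smul_le_sum_range_smul_of_antitoneOn hx hx₀ hpartial)
  exact (Real.rpow_inv_le_iff_of_pos hpow ((Real.rpow_nonneg hpow _).trans hnorm) hq₀).1 hnorm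

theorem sum_rpow_le_rpow_sum_mul_mul_of_le_mul_rpow_sum (hq : 1 ≤ q)
    (hx : AntitoneOn x (Set.Iio n)) (hx₀ : ∀ i < n, 0 ≤ x i) {y : ℕ → ℝ}
    (hy : ∀ k ∈ Icc 1 n, 0 ≤ ∑ j ∈ range k, y j) {C : ℝ} (hC₀ : 0 ≤ C)
    (hC : ∀ k ∈ Icc 1 n, (k : ℝ) ≤ C * (∑ j ∈ range k, y j) ^ q) :
    ∑ j ∈ range n, x j ^ q ≤ (∑ j ∈ range n, x j * y j) ^ q * C := by
  have hq₀ : 0 < q := by linarith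
  have hxy : 0 ≤ ∑ j ∈ range n, x j * y j := sum_range_smul_nonneg_of_antitoneOn hx hx₀ hy
  have hscaled : ∀ k ∈ Icc 1 n, (k : ℝ) ^ q⁻¹ ≤ ∑ j ∈ range k, y j * C ^ q⁻¹ := by
    intro k hk
    have hyk := hy k hk
    rw [← sum_mul, Real.rpow_inv_le_iff_of_pos (by positivity) (by positivity) hq₀,
      Real.mul_rpow hyk (by positivity), Real.rpow_inv_rpow hC₀ hq₀.ne', mul_comm]
    exact hC k hk
  calc ∑ j ∈ range n, x j ^ q ≤ (∑ j ∈ range n, x j * (y j * C ^ q⁻¹)) ^ q :=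
        sum_rpow_le_rpow_sum_mul_of_rpow_inv_le_sum hq hx hx₀ hscaled
    _ = ((∑ j ∈ range n, x j * y j) * C ^ q⁻¹) ^ q := by simp only [sum_mul, mul_assoc]
    _ = (∑ j ∈ range n, x j * y j) ^ q * C := by
        rw [Real.mul_rpow hxy (by positivity), Real.rpow_inv_rpow hC₀ hq₀.ne']

end LorentzBound

theorem numerical_inequality_ge_one_general {s : ℕ} (hs : 1 ≤ s) {q : ℝ} (hq : 1 ≤ q)
    {x y : ℕ → ℝ} (hx : AntitoneOn x (Set.Iio s)) (hx₀ : ∀ i < s, 0 ≤ x i)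
    (hy : ∀ k ∈ Icc 1 s, 0 < ∑ j ∈ range k, y j) :
    ∑ j ∈ range s, x j ^ q ≤
      (∑ j ∈ range s, x j * y j) ^ q *
        (Icc 1 s).sup' (nonempty_Icc.mpr hs) (fun k ↦ (k : ℝ) / (∑ j ∈ range k, y j) ^ q) := by
  set r : ℕ → ℝ := fun k ↦ (k : ℝ) / (∑ j ∈ range k, y j) ^ q
  have hr : ∀ k ∈ Icc 1 s, r k ≤ (Icc 1 s).sup' (nonempty_Icc.mpr hs) r := fun k hk ↦
    le_sup' r hk
  have h_one : 1 ∈ Icc 1 s := left_mem_Icc.2 hs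
  have hr_one : 0 ≤ r 1 := div_nonneg (Nat.cast_nonneg 1) (Real.rpow_nonneg (hy 1 h_one).le q)
  exact sum_rpow_le_rpow_sum_mul_mul_of_le_mul_rpow_sum hq hx hx₀ (fun k hk ↦ (hy k hk).le)
    (hr_one.trans (hr 1 h_one))
    fun k hk ↦ (div_le_iff₀ (Real.rpow_pos_of_pos (hy k hk) q)).1 (hr k hk)

/-- **Numerical inequality, case `q ≥ 1`.** If `x_1 ≥ … ≥ x_s ≥ 0` and
`y_1 ≥ … ≥ y_s ≥ 0` (with `y_1 > 0`), then
`∑_{j=1}^s x_j^q ≤ (∑_{j=1}^s x_j y_j)^q · max_{1 ≤ k ≤ s} k / (∑_{j=1}^k y_j)^q`.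
Here `x j`, `y j` (for `0 ≤ j < s`) play the roles of `x_{j+1}`, `y_{j+1}`. -/
theorem numerical_inequality_ge_one
    (s : ℕ) (hs : 1 ≤ s) (q : ℝ) (hq : 1 ≤ q)
    (x y : ℕ → ℝ)
    (hxanti : ∀ i j, i ≤ j → j < s → x j ≤ x i)
    (hxnn : ∀ i, i < s → 0 ≤ x i)
    (hyanti : ∀ i j, i ≤ j → j < s → y j ≤ y i)
    (hynn : ∀ i, i < s → 0 ≤ y i)
    (hy1 : 0 < y 0) :
    ∑ j ∈ Finset.range s, x j ^ q ≤
      (∑ j ∈ Finset.range s, x j * y j) ^ q *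
        (Finset.Icc 1 s).sup' (Finset.nonempty_Icc.mpr hs)
          (fun k => (k : ℝ) / (∑ j ∈ Finset.range k, y j) ^ q) := by
  refine numerical_inequality_ge_one_general hs hq (fun i _ j hj hij ↦ hxanti i j hij hj) hxnn
    fun k hk ↦ sum_pos' (fun i hi ↦ hynn i ?_) ⟨0, ?_, hy1⟩ <;> grind
end

section
/- Let s be a positive integer, let q be a real number with 0 ≤ q < 1, and let x_1 ≥ x_2 ≥ … ≥ x_s ≥ 0 and y_1 ≥ y_2 ≥ … ≥ y_s ≥ 0 be real numbers (with y_1 > 0 so the right-hand side is defined). Then ∑_{j=1}^{s} x_j^q ≤ (∑_{j=1}^{s} x_j y_j)^q · max_{1 ≤ k ≤ s} k / (∑_{j=1}^{k} y_j)^q. -/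
/-!
The term `k = s` of the maximum already suffices. By Jensen's inequality for the concave function
`t ↦ t ^ q`, the left-hand side is at most `s` times the `q`-th power of the mean of the `x_j`, and
by Chebyshev's sum inequality this mean is at most `(∑ x_j y_j) / ∑ y_j`.
-/

open Finset

section OrderedField

variable {ι 𝕜 : Type*} [Field 𝕜] [LinearOrder 𝕜] [IsStrictOrderedRing 𝕜] {t : Finset ι}

theorem sum_le_card_nsmul_map_mean_of_concaveOn {E β : Type*} [AddCommGroup E] [Module 𝕜 E]
    [AddCommGroup β] [PartialOrder β] [IsOrderedAddMonoid β] [Module 𝕜 β]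
    [IsStrictOrderedModule 𝕜 β] {D : Set E} {f : E → β} {p : ι → E}
    (hf : ConcaveOn 𝕜 D f) (ht : t.Nonempty) (hp : ∀ i ∈ t, p i ∈ D) :
    ∑ i ∈ t, f (p i) ≤ #t • f ((#t : 𝕜)⁻¹ • ∑ i ∈ t, p i) := by
  have hcard : (#t : 𝕜) ≠ 0 := Nat.cast_ne_zero.mpr ht.card_ne_zero
  have hweights : ∑ _i ∈ t, (#t : 𝕜)⁻¹ = 1 := by
    rw [sum_const, nsmul_eq_mul, mul_inv_cancel₀ hcard]
  calc ∑ i ∈ t, f (p i)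
      = #t • ∑ i ∈ t, (#t : 𝕜)⁻¹ • f (p i) := by
        rw [← smul_sum, ← Nat.cast_smul_eq_nsmul 𝕜, smul_inv_smul₀ hcard]
    _ ≤ #t • f (∑ i ∈ t, (#t : 𝕜)⁻¹ • p i) :=
        nsmul_le_nsmul_right
          (hf.le_map_sum (fun _ _ => inv_nonneg.mpr (Nat.cast_nonneg _)) hweights hp) _
    _ = #t • f ((#t : 𝕜)⁻¹ • ∑ i ∈ t, p i) := by rw [smul_sum]

theorem mean_le_sum_mul_div_sum_of_monovaryOn {x y : ι → 𝕜}
    (hxy : MonovaryOn x y t) (hy : 0 < ∑ i ∈ t, y i) :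
    (∑ i ∈ t, x i) / #t ≤ (∑ i ∈ t, x i * y i) / ∑ i ∈ t, y i := by
  have hcard : (0 : 𝕜) < #t :=
    Nat.cast_pos.mpr (nonempty_of_sum_ne_zero hy.ne').card_pos
  rw [div_le_div_iff₀ hcard hy, mul_comm _ (#t : 𝕜)]
  exact hxy.sum_mul_sum_le_card_mul_sum

end OrderedField

theorem sum_rpow_le_card_mul_mean_rpow {ι : Type*} {t : Finset ι} {q : ℝ} {x : ι → ℝ}
    (hq0 : 0 ≤ q) (hq1 : q ≤ 1) (ht : t.Nonempty) (hx : ∀ i ∈ t, 0 ≤ x i) :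
    ∑ i ∈ t, x i ^ q ≤ #t * ((∑ i ∈ t, x i) / #t) ^ q := by
  simpa only [nsmul_eq_mul, smul_eq_mul, inv_mul_eq_div] using
    sum_le_card_nsmul_map_mean_of_concaveOn (Real.concaveOn_rpow hq0 hq1) ht hx

theorem numerical_inequality_lt_one_general {ι : Type*} {t : Finset ι} {q : ℝ} {x y : ι → ℝ}
    (hq0 : 0 ≤ q) (hq1 : q ≤ 1) (hxy : MonovaryOn x y t)
    (hx : ∀ i ∈ t, 0 ≤ x i) (hy : 0 < ∑ i ∈ t, y i) :
    ∑ i ∈ t, x i ^ q ≤ (∑ i ∈ t, x i * y i) ^ q * (#t / (∑ i ∈ t, y i) ^ q) := by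
  have hmean_nonneg : 0 ≤ (∑ i ∈ t, x i) / #t := div_nonneg (sum_nonneg hx) (Nat.cast_nonneg _)
  have hmean_le := mean_le_sum_mul_div_sum_of_monovaryOn hxy hy
  have hxy_nonneg : 0 ≤ ∑ i ∈ t, x i * y i :=
    by
    simpa only [zero_mul] using (le_div_iff₀ hy).mp (hmean_nonneg.trans hmean_le)
  calc ∑ i ∈ t, x i ^ q
      ≤ #t * ((∑ i ∈ t, x i) / #t) ^ q :=
        sum_rpow_le_card_mul_mean_rpow hq0 hq1 (nonempty_of_sum_ne_zero hy.ne') hx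
    _ ≤ #t * ((∑ i ∈ t, x i * y i) / ∑ i ∈ t, y i) ^ q := by gcongr
    _ = (∑ i ∈ t, x i * y i) ^ q * (#t / (∑ i ∈ t, y i) ^ q) := by
        rw [Real.div_rpow hxy_nonneg hy.le, mul_div_left_comm]

/-- **Numerical inequality, case `0 ≤ q < 1`.** If `x_1 ≥ … ≥ x_s ≥ 0` and
`y_1 ≥ … ≥ y_s ≥ 0` (with `y_1 > 0`), then
`∑_{j=1}^s x_j^q ≤ (∑_{j=1}^s x_j y_j)^q · max_{1 ≤ k ≤ s} k / (∑_{j=1}^k y_j)^q`.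
Here `x j`, `y j` (for `0 ≤ j < s`) play the roles of `x_{j+1}`, `y_{j+1}`. -/
theorem numerical_inequality_lt_one
    (s : ℕ) (hs : 1 ≤ s) (q : ℝ) (hq0 : 0 ≤ q) (hq1 : q < 1)
    (x y : ℕ → ℝ)
    (hxanti : ∀ i j, i ≤ j → j < s → x j ≤ x i)
    (hxnn : ∀ i, i < s → 0 ≤ x i)
    (hyanti : ∀ i j, i ≤ j → j < s → y j ≤ y i)
    (hynn : ∀ i, i < s → 0 ≤ y i)
    (hy1 : 0 < y 0) :
    ∑ j ∈ Finset.range s, x j ^ q ≤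
      (∑ j ∈ Finset.range s, x j * y j) ^ q *
        (Finset.Icc 1 s).sup' (Finset.nonempty_Icc.mpr hs)
          (fun k => (k : ℝ) / (∑ j ∈ Finset.range k, y j) ^ q) := by
  have hx (i) (hi : i ∈ range s) : 0 ≤ x i := hxnn i (mem_range.mp hi)
  have hy (i) (hi : i ∈ range s) : 0 ≤ y i := hynn i (mem_range.mp hi)
  have hxy : MonovaryOn x y (range s) :=
    AntitoneOn.monovaryOn (fun i _ j hj hij => hxanti i j hij (mem_range.mp hj))
      (fun i _ j hj hij => hyanti i j hij (mem_range.mp hj))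
  have hy_sum : 0 < ∑ j ∈ range s, y j := sum_pos' hy ⟨0, mem_range.mpr hs, hy1⟩
  have hxy_sum : 0 ≤ ∑ j ∈ range s, x j * y j :=
    sum_nonneg fun i hi => mul_nonneg (hx i hi) (hy i hi)
  calc ∑ j ∈ range s, x j ^ q
      ≤ (∑ j ∈ range s, x j * y j) ^ q * (s / (∑ j ∈ range s, y j) ^ q) := by
        simpa only [card_range] using numerical_inequality_lt_one_general hq0 hq1.le hxy hx hy_sum
    _ ≤ _ := by
        gcongr
        exact le_sup' (fun k : ℕ => (k : ℝ) / (∑ j ∈ range k, y j) ^ q) (right_mem_Icc.mpr hs)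
end
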